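/- Let (X, d, T) be a topological dynamical system. Then the lower metric mean dimension satisfies mdim̲_M(X,d,T) = liminf_{ε→0} (1/log(1/ε)) · sup_{μ ∈ E_T(X)} h_μ^{BK}(ε), where h_μ^{BK}(ε) denotes the μ-essential supremum of x ↦ h_μ^{BK}(x,ε) (this function is μ-a.e. constant for ergodic μ). -/

import Mathlib

open Filter MeasureTheory Set Topology

variable {X : Type*}

/-- The dynamical (Bowen) metric `d_n(x,y) = max_{0 ≤ k ≤ n-1} d(T^k x, T^k y)`. -/
noncomputable def dynDist [MetricSpace X] (T : X → X) (n : ℕ) (x y : X) : ℝ :=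
  ⨆ k ∈ Finset.range n, dist (T^[k] x) (T^[k] y)

/-- The open dynamical ball `B_n(x, ε) = {y : d_n(x,y) < ε}`. -/
def dynBall [MetricSpace X] (T : X → X) (n : ℕ) (x : X) (ε : ℝ) : Set X :=
  {y | dynDist T n x y < ε}

/-- `s_n(K, ε)`: the maximal cardinality of an `(n,ε)`-separated subset of `K`. -/
noncomputable def sepNum [MetricSpace X] (T : X → X) (n : ℕ) (K : Set X) (ε : ℝ) : ℕ :=
  sSup {m | ∃ E : Finset X, ↑E ⊆ K ∧
    (∀ x ∈ E, ∀ y ∈ E, x ≠ y → ε < dynDist T n x y) ∧ E.card = m}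

/-- `S(K, ε) = limsup_n (1/n) log s_n(K, ε)`. -/
noncomputable def sepEnt [MetricSpace X] (T : X → X) (K : Set X) (ε : ℝ) : EReal :=
  limsup (fun n : ℕ => ((Real.log (sepNum T n K ε) / n : ℝ) : EReal)) atTop

/-- `r_n(K, ε)`: the minimal cardinality of an `(n,ε)`-spanning set for `K`. -/
noncomputable def spanNum [MetricSpace X] (T : X → X) (n : ℕ) (K : Set X) (ε : ℝ) : ℕ :=
  sInf {m | ∃ F : Finset X, (∀ x ∈ K, ∃ y ∈ F, dynDist T n x y ≤ ε) ∧ F.card = m}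

/-- `R(K, ε) = limsup_n (1/n) log r_n(K, ε)`. -/
noncomputable def spanEnt [MetricSpace X] (T : X → X) (K : Set X) (ε : ℝ) : EReal :=
  limsup (fun n : ℕ => ((Real.log (spanNum T n K ε) / n : ℝ) : EReal)) atTop

/-- Upper metric mean dimension. -/
noncomputable def mdimUpper [MetricSpace X] (T : X → X) : EReal :=
  limsup (fun ε : ℝ => sepEnt T univ ε / ((Real.log (1 / ε) : ℝ) : EReal)) (𝓝[>] (0:ℝ))

/-- Lower metric mean dimension. -/
noncomputable def mdimLower [MetricSpace X] (T : X → X) : EReal :=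
  liminf (fun ε : ℝ => sepEnt T univ ε / ((Real.log (1 / ε) : ℝ) : EReal)) (𝓝[>] (0:ℝ))

/-- The ergodic `T`-invariant Borel probability measures. -/
def ergodicMeasures [MeasurableSpace X] (T : X → X) : Set (Measure X) :=
  {μ | IsProbabilityMeasure μ ∧ Ergodic T μ}

/-- `U` is a finite open cover of `X`. -/
def IsFiniteOpenCover [TopologicalSpace X] (U : Finset (Set X)) : Prop :=
  (∀ V ∈ U, IsOpen V) ∧ ⋃₀ (U : Set (Set X)) = univ

/-- The cover `U^n = ⋁_{i=0}^{n-1} T^{-i} U`. -/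
def dynRefine (T : X → X) (U : Finset (Set X)) (n : ℕ) : Set (Set X) :=
  {V | ∃ f : Fin n → Set X, (∀ i, f i ∈ U) ∧ V = ⋂ i : Fin n, T^[(i : ℕ)] ⁻¹' f i}

/-- `N(C)`: the minimal cardinality of a subcover of `C`. -/
noncomputable def coverNum (C : Set (Set X)) : ℕ :=
  sInf {m | ∃ F : Finset (Set X), ↑F ⊆ C ∧ ⋃₀ (F : Set (Set X)) = univ ∧ F.card = m}

/-- `N_μ(U^n, δ)`: minimal number of members of `U^n` needed to cover a set of measure ≥ δ. -/
noncomputable def shapiraNum [MeasurableSpace X] (T : X → X) (μ : Measure X)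
    (U : Finset (Set X)) (n : ℕ) (δ : ℝ) : ℕ :=
  sInf {m | ∃ F : Finset (Set X), ↑F ⊆ dynRefine T U n ∧
    ENNReal.ofReal δ ≤ μ (⋃₀ (F : Set (Set X))) ∧ F.card = m}

/-- Shapira's entropy `h_μ^S(U, δ) = limsup_n (1/n) log N_μ(U^n, δ)`. -/
noncomputable def shapiraEnt [MeasurableSpace X] (T : X → X) (μ : Measure X)
    (U : Finset (Set X)) (δ : ℝ) : EReal :=
  limsup (fun n : ℕ => ((Real.log (shapiraNum T μ U n δ) / n : ℝ) : EReal)) atTop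

/-- `N_μ^δ(n, ε)`: smallest number of open `(n,ε)`-dynamical balls whose union has
measure `> δ`. -/
noncomputable def katokNum [MetricSpace X] [MeasurableSpace X] (T : X → X) (μ : Measure X)
    (n : ℕ) (ε δ : ℝ) : ℕ :=
  sInf {m | ∃ F : Finset X, ENNReal.ofReal δ < μ (⋃ x ∈ F, dynBall T n x ε) ∧ F.card = m}

/-- Katok's entropy `h_μ^K(ε, δ) = limsup_n (1/n) log N_μ^δ(n, ε)`. -/
noncomputable def katokEnt [MetricSpace X] [MeasurableSpace X] (T : X → X) (μ : Measure X)
    (ε δ : ℝ) : EReal :=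
  limsup (fun n : ℕ => ((Real.log (katokNum T μ n ε δ) / n : ℝ) : EReal)) atTop

/-- Lower Katok entropy `h̲_μ^K(ε, δ) = liminf_n (1/n) log N_μ^δ(n, ε)`. -/
noncomputable def katokEntLower [MetricSpace X] [MeasurableSpace X] (T : X → X) (μ : Measure X)
    (ε δ : ℝ) : EReal :=
  liminf (fun n : ℕ => ((Real.log (katokNum T μ n ε δ) / n : ℝ) : EReal)) atTop

/-- `Ñ_μ^δ(n, ε)`: smallest number of sets of `d_n`-diameter ≤ ε whose union has
measure `> δ`. -/
noncomputable def katokNumTilde [MetricSpace X] [MeasurableSpace X] (T : X → X) (μ : Measure X)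
    (n : ℕ) (ε δ : ℝ) : ℕ :=
  sInf {m | ∃ F : Finset (Set X), (∀ A ∈ F, ∀ x ∈ A, ∀ y ∈ A, dynDist T n x y ≤ ε) ∧
    ENNReal.ofReal δ < μ (⋃₀ (F : Set (Set X))) ∧ F.card = m}

/-- Brin–Katok local entropy `h_μ^{BK}(x, ε) = limsup_n -(1/n) log μ(B_n(x, ε))`. -/
noncomputable def brinKatok [MetricSpace X] [MeasurableSpace X] (T : X → X) (μ : Measure X)
    (x : X) (ε : ℝ) : EReal :=
  limsup (fun n : ℕ => -(ENNReal.log (μ (dynBall T n x ε))) / (n : EReal)) atTop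

/-- Lower Brin–Katok local entropy `h̲_μ^{BK}(x, ε) = liminf_n -(1/n) log μ(B_n(x, ε))`. -/
noncomputable def brinKatokLower [MetricSpace X] [MeasurableSpace X] (T : X → X) (μ : Measure X)
    (x : X) (ε : ℝ) : EReal :=
  liminf (fun n : ℕ => -(ENNReal.log (μ (dynBall T n x ε))) / (n : EReal)) atTop

/-- Local entropy function `h_d(x, ε) = inf { S(K, ε) : K closed neighborhood of x }`. -/
noncomputable def locEnt [MetricSpace X] (T : X → X) (x : X) (ε : ℝ) : EReal :=
  ⨅ K ∈ {K : Set X | IsClosed K ∧ K ∈ 𝓝 x}, sepEnt T K ε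

/-- Local spanning entropy `h̃_d(x, ε) = inf { R(K, ε) : K closed neighborhood of x }`. -/
noncomputable def locSpanEnt [MetricSpace X] (T : X → X) (x : X) (ε : ℝ) : EReal :=
  ⨅ K ∈ {K : Set X | IsClosed K ∧ K ∈ 𝓝 x}, spanEnt T K ε

/-- `U_x^n`: the union of all cells of `U^n` containing `x`. -/
def dynCoverCell (T : X → X) (U : Finset (Set X)) (n : ℕ) (x : X) : Set X :=
  ⋃₀ {V | V ∈ dynRefine T U n ∧ x ∈ V}

/-!
Up to constant factors in `ε`, which are invisible after division by `log (1 / ε)`, the entropy of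
separated sets and the supremum of the local entropies over ergodic measures bound each other.

If `S(X, ε) < a`, then the points whose ball `B_n(x, 2ε)` has measure less than `exp (-n a)` are
covered by at most `s_n(X, ε)` such balls, so their measure is summable in `n`; by Borel–Cantelli
the local entropy at scale `2ε` is almost everywhere at most `a`.

Conversely, suppose that `h_μ^{BK}(x, ε) < t` almost everywhere for every ergodic `μ`. For large `n`
most of `μ` then lies in some union of `exp (n t)` dynamical balls `B_n(y, 3ε)`, whose centers can
be taken in a finite set independent of `μ`. An orbit segment of length `L` that rarely leaves such
a union is determined up to `6ε` by roughly `exp (L t)` choices; the segments of this kind form an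
open set, which is large for every ergodic measure. Every accumulation point of empirical measures
is invariant and therefore gives this set at least the mass that some ergodic measure gives it, so
all long orbits visit it with a uniform frequency close to one. Cutting orbits greedily into such
segments and a small proportion of single steps shows `S(X, 6ε) ≤ t`.
-/

section DynCoverable

open Dynamics

variable {T : X → X} {U : SetRel X X} {m n : ℕ} {A B : Set X} {a b : ℝ}

/-- `A` can be covered by at most `a` sets any two points of which stay `U`-close up to time `n`.
The bound is a real number so that it can be estimated by exponentials without rounding. -/
def DynCoverable (T : X → X) (U : SetRel X X) (n : ℕ) (A : Set X) (a : ℝ) : Prop :=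
  ∃ F : Finset (Set X), (∀ s ∈ F, s ×ˢ s ⊆ dynEntourage T U n) ∧ A ⊆ ⋃₀ (F : Set (Set X)) ∧
    (F.card : ℝ) ≤ a

namespace DynCoverable

lemma mono (h : DynCoverable T U n B a) (hm : m ≤ n) (hA : A ⊆ B) (hb : a ≤ b) :
    DynCoverable T U m A b :=
  let ⟨F, hF, hBF, hFa⟩ := h
  ⟨F, fun s hs => (hF s hs).trans (dynEntourage_antitone T U hm), hA.trans hBF, hFa.trans hb⟩

lemma time_zero (T : X → X) (U : SetRel X X) (A : Set X) : DynCoverable T U 0 A 1 :=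
  ⟨{univ}, by simp, by simp, by simp⟩

lemma empty (T : X → X) (U : SetRel X X) (n : ℕ) : DynCoverable T U n ∅ 0 :=
  ⟨∅, by simp, by simp, by simp⟩

lemma union (hA : DynCoverable T U n A a) (hB : DynCoverable T U n B b) :
    DynCoverable T U n (A ∪ B) (a + b) := by
  classical
  obtain ⟨F, hF, hAF, hFa⟩ := hA
  obtain ⟨F', hF', hBF', hFb⟩ := hB
  refine ⟨F ∪ F', fun s hs => (Finset.mem_union.1 hs).elim (hF s) (hF' s), ?_, ?_⟩
  · rw [Finset.coe_union, sUnion_union]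
    exact union_subset_union hAF hBF'
  · calc ((F ∪ F').card : ℝ) ≤ F.card + F'.card := mod_cast Finset.card_union_le F F'
      _ ≤ a + b := add_le_add hFa hFb

lemma biUnion {ι : Type*} (J : Finset ι) {V : ι → Set X} {c : ι → ℝ}
    (h : ∀ j ∈ J, DynCoverable T U n (V j) (c j)) :
    DynCoverable T U n (⋃ j ∈ J, V j) (∑ j ∈ J, c j) := by
  classical
  induction J using Finset.induction_on with
  | empty => simpa using empty T U n
  | insert i J hi ih =>
    rw [Finset.sum_insert hi, Finset.set_biUnion_insert]
    exact (h i (Finset.mem_insert_self i J)).union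
      (ih fun j hj => h j (Finset.mem_insert_of_mem hj))

lemma inter_preimage (hA : DynCoverable T U m A a) (hB : DynCoverable T U n B b) :
    DynCoverable T U (m + n) (A ∩ T^[m] ⁻¹' B) (a * b) := by
  classical
  obtain ⟨F, hF, hAF, hFa⟩ := hA
  obtain ⟨F', hF', hBF', hFb⟩ := hB
  refine ⟨Finset.image₂ (fun s s' => s ∩ T^[m] ⁻¹' s') F F', fun r hr => ?_, ?_, ?_⟩
  · obtain ⟨s, hs, s', hs', rfl⟩ := Finset.mem_image₂.1 hr
    rintro ⟨x, y⟩ ⟨⟨hxs, hxs'⟩, hys, hys'⟩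
    refine mem_dynEntourage.2 fun k hk => ?_
    rcases lt_or_ge k m with hkm | hmk
    · exact mem_dynEntourage.1 (hF s hs (mk_mem_prod hxs hys)) k hkm
    · have := mem_dynEntourage.1 (hF' s' hs' (mk_mem_prod hxs' hys')) (k - m) (by omega)
      rwa [← Function.iterate_add_apply, ← Function.iterate_add_apply,
        Nat.sub_add_cancel hmk] at this
  · rintro x ⟨hxA, hxB⟩
    obtain ⟨s, hs, hxs⟩ := hAF hxA
    obtain ⟨s', hs', hxs'⟩ := hBF' hxB
    exact ⟨_, Finset.mem_coe.2 (Finset.mem_image₂_of_mem hs hs'), hxs, hxs'⟩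
  · calc ((Finset.image₂ _ F F').card : ℝ) ≤ F.card * F'.card :=
          mod_cast Finset.card_image₂_le _ F F'
      _ ≤ a * b := by gcongr; exact (Nat.cast_nonneg _).trans hFa

end DynCoverable

end DynCoverable

section ExitCount

variable {T : X → X} {G : Set X} {m n : ℕ} {b : ℝ} {x : X}

/-- The number of times `k < n` at which the orbit of `x` is outside `G`. -/
noncomputable def exitCount (T : X → X) (G : Set X) (n : ℕ) (x : X) : ℝ :=
  birkhoffSum T (Gᶜ.indicator 1) n x

/-- The points whose orbit leaves `G` fewer than `b` times before time `n`. -/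
def fewExits (T : X → X) (G : Set X) (n : ℕ) (b : ℝ) : Set X :=
  {x | exitCount T G n x < b}

lemma exitCount_nonneg (T : X → X) (G : Set X) (n : ℕ) (x : X) : 0 ≤ exitCount T G n x := by
  unfold exitCount birkhoffSum
  exact Finset.sum_nonneg fun k _ => indicator_apply_nonneg fun _ => zero_le_one

lemma exitCount_add (T : X → X) (G : Set X) (m n : ℕ) (x : X) :
    exitCount T G (m + n) x = exitCount T G m x + exitCount T G n (T^[m] x) :=
  birkhoffSum_add T _ m n x

lemma exitCount_one_of_notMem (hx : x ∉ G) : exitCount T G 1 x = 1 := by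
  simp [exitCount, hx]

lemma fewExits_eq_empty (T : X → X) (G : Set X) (n : ℕ) (hb : b ≤ 0) : fewExits T G n b = ∅ :=
  eq_empty_of_forall_notMem fun x hx => (hb.trans (exitCount_nonneg T G n x)).not_gt hx

lemma iterate_mem_fewExits (hx : x ∈ fewExits T G (m + n) b) : T^[m] x ∈ fewExits T G n b := by
  have hx : exitCount T G m x + exitCount T G n (T^[m] x) < b := exitCount_add T G m n x ▸ hx
  exact lt_of_le_of_lt (le_add_of_nonneg_left (exitCount_nonneg T G m x)) hx

lemma apply_mem_fewExits_of_notMem (hx : x ∈ fewExits T G (1 + n) b) (hxG : x ∉ G) :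
    T^[1] x ∈ fewExits T G n (b - 1) := by
  have hx : exitCount T G 1 x + exitCount T G n (T^[1] x) < b := exitCount_add T G 1 n x ▸ hx
  rw [exitCount_one_of_notMem hxG] at hx
  exact lt_sub_iff_add_lt'.2 hx

end ExitCount

section Greedy

variable {T : X → X} {U : SetRel X X} {s t K : ℝ}

lemma DynCoverable.inter_fewExits {G V : Set X} {L N : ℕ} {b w : ℝ} (ht : 0 ≤ t) (hb : 0 ≤ b * s)
    (hK : Real.exp (L * t) ≤ K) (hw : 0 ≤ w) (hV : DynCoverable T U L V (w * Real.exp (L * t)))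
    (ih : L ≤ N → DynCoverable T U (N - L) (fewExits T G (N - L) b)
      (K * Real.exp ((N - L : ℕ) * t + b * s))) :
    DynCoverable T U N (V ∩ fewExits T G N b) (w * (K * Real.exp (N * t + b * s))) := by
  rcases le_or_gt L N with hLN | hNL
  · obtain ⟨n, rfl⟩ := Nat.exists_eq_add_of_le hLN
    rw [Nat.add_sub_cancel_left] at ih
    refine (hV.inter_preimage (ih hLN)).mono le_rfl
      (inter_subset_inter_right V fun x => iterate_mem_fewExits) (le_of_eq ?_)
    calc w * Real.exp (L * t) * (K * Real.exp (n * t + b * s))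
        = w * (K * (Real.exp (L * t) * Real.exp (n * t + b * s))) := by ring
      _ = w * (K * Real.exp ((L + n : ℕ) * t + b * s)) := by
        rw [← Real.exp_add]; push_cast; ring_nf
  · refine hV.mono hNL.le inter_subset_left (mul_le_mul_of_nonneg_left ?_ hw)
    exact hK.trans (le_mul_of_one_le_right ((Real.exp_pos _).le.trans hK)
      (Real.one_le_exp (by positivity)))

lemma DynCoverable.fewExits_diff {G : Set X} {N : ℕ} {b : ℝ} (ht : 0 ≤ t) (hK : 0 ≤ K)
    (hX : DynCoverable T U 1 univ (Real.exp s / 2))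
    (ih : DynCoverable T U N (fewExits T G N (b - 1)) (K * Real.exp (N * t + (b - 1) * s))) :
    DynCoverable T U (1 + N) (fewExits T G (1 + N) b \ G)
      (1 / 2 * (K * Real.exp ((1 + N : ℕ) * t + b * s))) := by
  refine (hX.inter_preimage ih).mono le_rfl
    (fun x hx => ⟨mem_univ x, apply_mem_fewExits_of_notMem hx.1 hx.2⟩) ?_
  calc Real.exp s / 2 * (K * Real.exp (N * t + (b - 1) * s))
      = 1 / 2 * (K * (Real.exp s * Real.exp (N * t + (b - 1) * s))) := by ring
    _ = 1 / 2 * (K * Real.exp (N * t + b * s)) := by rw [← Real.exp_add]; ring_nf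
    _ ≤ 1 / 2 * (K * Real.exp ((1 + N : ℕ) * t + b * s)) := by gcongr; simp

/-- Follow an orbit greedily: inside a cell `V j` pay for the next `L j` iterates at once, outside
all cells pay for a single iterate. The cells cost in total at most half of the budget, and each of
the fewer than `b` single iterates is paid by a factor `exp s`, half of which suffices. -/
theorem DynCoverable.fewExits_biUnion {ι : Type*} (J : Finset ι) {L : ι → ℕ} {V : ι → Set X}
    {w : ι → ℝ} (hs : 0 ≤ s) (ht : 0 ≤ t) (hK : 1 ≤ K)
    (hX : DynCoverable T U 1 univ (Real.exp s / 2))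
    (hL : ∀ j ∈ J, 1 ≤ L j) (hw : ∀ j ∈ J, 0 ≤ w j) (hw_sum : ∑ j ∈ J, w j ≤ 1 / 2)
    (hV : ∀ j ∈ J, DynCoverable T U (L j) (V j) (w j * Real.exp (L j * t)))
    (hLK : ∀ j ∈ J, Real.exp (L j * t) ≤ K) (N : ℕ) (b : ℝ) :
    DynCoverable T U N (fewExits T (⋃ j ∈ J, V j) N b) (K * Real.exp (N * t + b * s)) := by
  set G := ⋃ j ∈ J, V j with hG
  induction N using Nat.strong_induction_on generalizing b with
  | _ N ih =>
  rcases le_or_gt b 0 with hb | hb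
  · rw [fewExits_eq_empty T G N hb]
    exact (DynCoverable.empty T U N).mono le_rfl le_rfl (by positivity)
  rcases N with _ | N
  · refine (DynCoverable.time_zero T U _).mono le_rfl le_rfl (one_le_mul_of_one_le_of_one_le hK ?_)
    exact Real.one_le_exp (by positivity)
  have h_in := DynCoverable.biUnion J fun j hj =>
    (hV j hj).inter_fewExits (G := G) ht (by positivity) (hLK j hj) (hw j hj)
      fun _ => ih (N + 1 - L j) (Nat.sub_lt N.succ_pos (hL j hj)) b
  have h_out :=
    DynCoverable.fewExits_diff ht (zero_le_one.trans hK) hX (ih N N.lt_succ_self (b - 1))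
  rw [add_comm 1 N] at h_out
  refine (h_in.union h_out).mono le_rfl (fun x hx => ?_) ?_
  · rw [← iUnion₂_inter, ← hG]
    exact (em (x ∈ G)).imp (⟨·, hx⟩) (⟨hx, ·⟩)
  · rw [← Finset.sum_mul, ← add_mul]
    exact mul_le_of_le_one_left (by positivity) (by linarith)

lemma DynCoverable.fewExits {W : Set X} {n : ℕ} (hs : 0 ≤ s) (ht : 0 ≤ t) (hn : 1 ≤ n)
    (hX : DynCoverable T U 1 univ (Real.exp s / 2))
    (hW : DynCoverable T U n W (Real.exp (n * t) / 2)) (N : ℕ) (b : ℝ) :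
    DynCoverable T U N (fewExits T W N b) (Real.exp (n * t) * Real.exp (N * t + b * s)) := by
  have h := DynCoverable.fewExits_biUnion {()} (L := fun _ => n) (V := fun _ => W)
    (w := fun _ => 1 / 2) hs ht (Real.one_le_exp (by positivity)) hX (fun _ _ => hn)
    (fun _ _ => by norm_num) (by simp)
    (fun _ _ => hW.mono le_rfl le_rfl (one_div_mul_eq_div _ _).ge) (fun _ _ => le_rfl) N b
  rwa [Finset.set_biUnion_singleton] at h

end Greedy

section BirkhoffSumIntegral

variable {E : Type*} [NormedAddCommGroup E] [MeasurableSpace X] {μ : Measure X} {T : X → X}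
  {f : X → E}

lemma integrable_birkhoffSum (hT : MeasurePreserving T μ μ) (hf : Integrable f μ) (n : ℕ) :
    Integrable (birkhoffSum T f n) μ := by
  unfold birkhoffSum
  exact integrable_finsetSum _ fun k _ => (hT.iterate k).integrable_comp_of_integrable hf

lemma integral_birkhoffSum [NormedSpace ℝ E] (hT : MeasurePreserving T μ μ) (hf : Integrable f μ)
    (n : ℕ) : ∫ x, birkhoffSum T f n x ∂μ = n • ∫ x, f x ∂μ := by
  have h_iterate (k : ℕ) : ∫ x, f (T^[k] x) ∂μ = ∫ x, f x ∂μ := by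
    have h_map := (hT.iterate k).map_eq
    rw [← integral_map (hT.iterate k).aemeasurable (h_map.symm ▸ hf.1), h_map]
  unfold birkhoffSum
  rw [integral_finsetSum (f := fun k x => f (T^[k] x)) _ fun k _ =>
    (hT.iterate k).integrable_comp_of_integrable hf]
  simp [h_iterate]

end BirkhoffSumIntegral

section ExitCountMeasure

variable {T : X → X} {G : Set X}

lemma isOpen_fewExits [TopologicalSpace X] (hT : Continuous T) (hG : IsOpen G) (n : ℕ) (b : ℝ) :
    IsOpen (fewExits T G n b) := by
  have h_ind : UpperSemicontinuous (Gᶜ.indicator (1 : X → ℝ)) :=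
    hG.isClosed_compl.upperSemicontinuous_indicator zero_le_one
  have h_sum : UpperSemicontinuous (exitCount T G n) := by
    unfold exitCount birkhoffSum
    exact upperSemicontinuous_sum fun k _ => h_ind.comp (hT.iterate k)
  exact h_sum.isOpen_preimage b

/-- Markov's inequality for the number of exits. -/
lemma one_sub_le_measureReal_fewExits [MeasurableSpace X] {μ : Measure X} [IsProbabilityMeasure μ]
    (hT : MeasurePreserving T μ μ) (hG : MeasurableSet G) {n : ℕ} (hn : 1 ≤ n) {δ : ℝ} (hδ : 0 < δ)
    (hGδ : μ.real Gᶜ ≤ δ ^ 2) : 1 - δ ≤ μ.real (fewExits T G n (δ * n)) := by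
  have h_ind : Integrable (Gᶜ.indicator (1 : X → ℝ)) μ := (integrable_const 1).indicator hG.compl
  have h_integral : ∫ x, exitCount T G n x ∂μ = n * μ.real Gᶜ := by
    unfold exitCount
    rw [integral_birkhoffSum hT h_ind, integral_indicator_one hG.compl, nsmul_eq_mul]
  have h_markov := mul_meas_ge_le_integral_of_nonneg
    (ae_of_all μ fun x => exitCount_nonneg T G n x) (integrable_birkhoffSum hT h_ind n) (δ * n)
  have h_compl : μ.real (fewExits T G n (δ * n))ᶜ ≤ δ := by
    have hn : (0 : ℝ) < n := mod_cast hn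
    refine le_of_mul_le_mul_left ?_ (mul_pos hδ hn)
    calc δ * n * μ.real (fewExits T G n (δ * n))ᶜ
        = δ * n * μ.real {x | δ * n ≤ exitCount T G n x} := by
          simp only [fewExits, compl_ofPred, not_lt]
      _ ≤ n * μ.real Gᶜ := h_integral ▸ h_markov
      _ ≤ δ * n * δ := by nlinarith
  have h_union := measureReal_union_le (μ := μ) (fewExits T G n (δ * n)) (fewExits T G n (δ * n))ᶜ
  rw [union_compl_self, probReal_univ] at h_union
  linarith

end ExitCountMeasure

section BowenMetric

variable [MetricSpace X] {T : X → X} {n : ℕ} {x y : X} {ε : ℝ}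

lemma dist_le_dynDist (T : X → X) {k : ℕ} (hk : k < n) (x y : X) :
    dist (T^[k] x) (T^[k] y) ≤ dynDist T n x y := by
  have h_bdd : BddAbove (range fun k => ⨆ (_ : k ∈ Finset.range n), dist (T^[k] x) (T^[k] y)) := by
    refine ⟨∑ k ∈ Finset.range n, dist (T^[k] x) (T^[k] y), forall_mem_range.2 fun k => ?_⟩
    exact Real.iSup_le (fun hk => Finset.single_le_sum (f := fun k => dist (T^[k] x) (T^[k] y))
      (fun _ _ => dist_nonneg) hk) (Finset.sum_nonneg fun _ _ => dist_nonneg)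
  exact (ciSup_pos (Finset.mem_range.2 hk)).ge.trans (le_ciSup h_bdd k)

lemma dynDist_le (hε : 0 ≤ ε) (h : ∀ k < n, dist (T^[k] x) (T^[k] y) ≤ ε) : dynDist T n x y ≤ ε :=
  Real.iSup_le (fun k => Real.iSup_le (fun hk => h k (Finset.mem_range.1 hk)) hε) hε

lemma dynDist_nonneg (T : X → X) (n : ℕ) (x y : X) : 0 ≤ dynDist T n x y :=
  Real.iSup_nonneg fun _ => Real.iSup_nonneg fun _ => dist_nonneg

lemma dynDist_self (T : X → X) (n : ℕ) (x : X) : dynDist T n x x = 0 := by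
  simp [dynDist]

lemma dynDist_comm (T : X → X) (n : ℕ) (x y : X) : dynDist T n x y = dynDist T n y x := by
  simp only [dynDist, dist_comm]

lemma dynDist_triangle (T : X → X) (n : ℕ) (x y z : X) :
    dynDist T n x z ≤ dynDist T n x y + dynDist T n y z :=
  dynDist_le (add_nonneg (dynDist_nonneg T n x y) (dynDist_nonneg T n y z)) fun k hk =>
    (dist_triangle _ (T^[k] y) _).trans
      (add_le_add (dist_le_dynDist T hk x y) (dist_le_dynDist T hk y z))

lemma dynDist_lt_iff (hε : 0 < ε) :
    dynDist T n x y < ε ↔ ∀ k < n, dist (T^[k] x) (T^[k] y) < ε := by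
  refine ⟨fun h k hk => (dist_le_dynDist T hk x y).trans_lt h, fun h => ?_⟩
  rcases Nat.eq_zero_or_pos n with rfl | hn
  · simpa [dynDist] using hε
  · obtain ⟨k, hk, hk_max⟩ := Finset.exists_max_image (Finset.range n)
      (fun k => dist (T^[k] x) (T^[k] y)) ⟨0, Finset.mem_range.2 hn⟩
    exact (dynDist_le dist_nonneg fun j hj => hk_max j (Finset.mem_range.2 hj)).trans_lt
      (h k (Finset.mem_range.1 hk))

lemma mem_dynBall_self (hε : 0 < ε) : x ∈ dynBall T n x ε :=
  (dynDist_self T n x).trans_lt hε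

lemma isOpen_dynBall (hT : Continuous T) (n : ℕ) (x : X) (hε : 0 < ε) :
    IsOpen (dynBall T n x ε) := by
  have h_eq : dynBall T n x ε = ⋂ k ∈ Finset.range n, T^[k] ⁻¹' Metric.ball (T^[k] x) ε := by
    ext y
    simp [dynBall, dynDist_lt_iff hε, dist_comm]
  rw [h_eq]
  exact isOpen_biInter_finset fun k _ => Metric.isOpen_ball.preimage (hT.iterate k)

lemma exists_finset_iUnion_dynBall_eq_univ [CompactSpace X] (hT : Continuous T) (n : ℕ)
    (hε : 0 < ε) : ∃ D : Finset X, ⋃ y ∈ D, dynBall T n y ε = univ := by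
  obtain ⟨D, hD⟩ := isCompact_univ.elim_finite_subcover (fun y => dynBall T n y ε)
    (fun y => isOpen_dynBall hT n y hε) fun x _ => mem_iUnion.2 ⟨x, mem_dynBall_self hε⟩
  exact ⟨D, univ_subset_iff.1 hD⟩

lemma DynCoverable.biUnion_dynBall (T : X → X) (n : ℕ) (C : Finset X) (ε : ℝ) :
    DynCoverable T {p | dist p.1 p.2 ≤ 2 * ε} n (⋃ y ∈ C, dynBall T n y ε) C.card := by
  classical
  refine ⟨C.image fun y => dynBall T n y ε, ?_, by simp [sUnion_image],
    mod_cast Finset.card_image_le⟩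
  simp only [Finset.forall_mem_image]
  rintro c - ⟨x, y⟩ ⟨hx, hy⟩
  refine Dynamics.mem_dynEntourage.2 fun k hk => (dist_le_dynDist T hk x y).trans ?_
  have hx : dynDist T n c x < ε := hx
  have hy : dynDist T n c y < ε := hy
  linarith [dynDist_triangle T n x c y, dynDist_comm T n x c]

lemma DynCoverable.exists_univ [CompactSpace X] (hT : Continuous T) (n : ℕ) (hε : 0 < ε) :
    ∃ a, DynCoverable T {p | dist p.1 p.2 ≤ ε} n univ a := by
  obtain ⟨D, hD⟩ := exists_finset_iUnion_dynBall_eq_univ hT n (half_pos hε)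
  have h := DynCoverable.biUnion_dynBall T n D (ε / 2)
  rw [hD, mul_div_cancel₀ ε two_ne_zero] at h
  exact ⟨_, h⟩

end BowenMetric

section SeparatedSets

open Dynamics

lemma exists_finset_isSeparated_isCover {R : SetRel X X} [R.IsRefl] [R.IsSymm] {A : Set X} {c : ℕ}
    (h : ∀ E : Finset X, ↑E ⊆ A → R.IsSeparated (E : Set X) → E.card ≤ c) :
    ∃ E : Finset X, ↑E ⊆ A ∧ R.IsSeparated (E : Set X) ∧ R.IsCover A E := by
  classical
  let S : Set ℕ := {m | ∃ E : Finset X, ↑E ⊆ A ∧ R.IsSeparated (E : Set X) ∧ E.card = m}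
  have hS : BddAbove S := ⟨c, by rintro _ ⟨E, hEA, hE, rfl⟩; exact h E hEA hE⟩
  obtain ⟨E, hEA, hE, hE_card⟩ : sSup S ∈ S := Nat.sSup_mem ⟨0, ∅, by simp, by simp, rfl⟩ hS
  refine ⟨E, hEA, hE, .of_maximal_isSeparated ⟨⟨hEA, hE⟩, fun N ⟨hNA, hN⟩ hEN x hx => ?_⟩⟩
  have h_insert : ((insert x E : Finset X) : Set X) ⊆ N := by
    rw [Finset.coe_insert]
    exact insert_subset hx hEN
  have h_card := le_csSup hS ⟨insert x E, h_insert.trans hNA, hN.mono_right h_insert, rfl⟩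
  by_contra hxE
  rw [← hE_card, Finset.card_insert_of_notMem hxE] at h_card
  omega

lemma DynCoverable.card_le_of_isSeparated {T : X → X} {U : SetRel X X} {n : ℕ} {A : Set X} {a : ℝ}
    (h : DynCoverable T U n A a) {E : Finset X} (hEA : ↑E ⊆ A)
    (hE : (dynEntourage T U n).IsSeparated (E : Set X)) : (E.card : ℝ) ≤ a := by
  obtain ⟨F, hF, hAF, hFa⟩ := h
  choose! f hfF hf using fun x (hx : x ∈ E) => hAF (hEA hx)
  have hf_inj : InjOn f E := fun x hx y hy hxy => by
    by_contra hne
    exact hE hx hy hne (hF (f x) (hfF x hx) (mk_mem_prod (hf x hx) (hxy ▸ hf y hy)))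
  exact hFa.trans' (mod_cast Finset.card_le_card_of_injOn f hfF hf_inj)

variable [MetricSpace X] {T : X → X} {n : ℕ} {A : Set X} {ε : ℝ}

lemma exists_finset_separated_spanning (hε : 0 ≤ ε) {c : ℕ}
    (h : ∀ E : Finset X, ↑E ⊆ A → (∀ x ∈ E, ∀ y ∈ E, x ≠ y → ε < dynDist T n x y) → E.card ≤ c) :
    ∃ E : Finset X, ↑E ⊆ A ∧ (∀ x ∈ E, ∀ y ∈ E, x ≠ y → ε < dynDist T n x y) ∧
      ∀ x ∈ A, ∃ y ∈ E, dynDist T n x y ≤ ε := by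
  let R : SetRel X X := {p | dynDist T n p.1 p.2 ≤ ε}
  have : R.IsRefl := ⟨fun x => (dynDist_self T n x).trans_le hε⟩
  have : R.IsSymm := ⟨fun x y hxy => (dynDist_comm T n y x).trans_le hxy⟩
  obtain ⟨E, hEA, hE, hE_cover⟩ := exists_finset_isSeparated_isCover (R := R) fun E hEA hE =>
    h E hEA fun x hx y hy hxy => not_le.1 (hE hx hy hxy)
  exact ⟨E, hEA, fun x hx y hy hxy => not_le.1 (hE hx hy hxy), hE_cover⟩

lemma DynCoverable.card_le_of_lt_dynDist {a : ℝ} (h : DynCoverable T {p | dist p.1 p.2 ≤ ε} n A a)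
    (hε : 0 ≤ ε) {E : Finset X} (hEA : ↑E ⊆ A)
    (hE : ∀ x ∈ E, ∀ y ∈ E, x ≠ y → ε < dynDist T n x y) : (E.card : ℝ) ≤ a :=
  h.card_le_of_isSeparated hEA fun x hx y hy hxy hU =>
    (hE x hx y hy hxy).not_ge (dynDist_le hε (mem_dynEntourage.1 hU))

lemma DynCoverable.sepNum_le {a : ℝ} (h : DynCoverable T {p | dist p.1 p.2 ≤ ε} n A a)
    (hε : 0 ≤ ε) : sepNum T n A ε ≤ a := by
  obtain ⟨E, hEA, hE, hE_card⟩ := Nat.sSup_mem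
    (s := {m | ∃ E : Finset X, ↑E ⊆ A ∧ (∀ x ∈ E, ∀ y ∈ E, x ≠ y → ε < dynDist T n x y) ∧
      E.card = m}) ⟨0, ∅, by simp, by simp, rfl⟩ ⟨⌊a⌋₊, by
        rintro _ ⟨E, hEA, hE, rfl⟩
        exact Nat.le_floor (h.card_le_of_lt_dynDist hε hEA hE)⟩
  unfold sepNum
  rw [← hE_card]
  exact h.card_le_of_lt_dynDist hε hEA hE

lemma card_le_sepNum [CompactSpace X] (hT : Continuous T) (hε : 0 < ε) {E : Finset X}
    (hEA : ↑E ⊆ A) (hE : ∀ x ∈ E, ∀ y ∈ E, x ≠ y → ε < dynDist T n x y) :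
    E.card ≤ sepNum T n A ε := by
  obtain ⟨a, ha⟩ := DynCoverable.exists_univ hT n hε
  refine le_csSup ⟨⌊a⌋₊, ?_⟩ ⟨E, hEA, hE, rfl⟩
  rintro _ ⟨E, -, hE, rfl⟩
  exact Nat.le_floor (ha.card_le_of_lt_dynDist hε.le (subset_univ _) hE)

end SeparatedSets

section ErgodicMeasures

open scoped ENNReal

lemma isExtreme_setOf_measure_le [MeasurableSpace X] {A : Set (Measure X)} {W : Set X} {c : ℝ≥0∞}
    (hc : c ≠ ∞) (hA : ∀ ν ∈ A, c ≤ ν W) : IsExtreme ℝ≥0∞ A {ν ∈ A | ν W ≤ c} := by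
  refine ⟨sep_subset A _, ?_⟩
  rintro ν hν ν' hν' - ⟨-, hle⟩ ⟨a, b, ha, -, hab, rfl⟩
  refine ⟨hν, le_of_not_gt fun hlt => hle.not_gt ?_⟩
  have ha_top : a ≠ ∞ := ne_top_of_le_ne_top ENNReal.one_ne_top (hab ▸ le_self_add)
  have hb_top : b ≠ ∞ := ne_top_of_le_ne_top ENNReal.one_ne_top (hab ▸ le_add_self)
  calc c = a * c + b * c := by rw [← add_mul, hab, one_mul]
    _ < a * ν W + b * ν' W :=
      ENNReal.add_lt_add_of_lt_of_le (ENNReal.mul_ne_top hb_top hc)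
        ((ENNReal.mul_lt_mul_iff_right ha.ne' ha_top).2 hlt) (mul_le_mul_right (hA ν' hν') b)
    _ = (a • ν + b • ν') W := rfl

variable [TopologicalSpace X] [HasOuterApproxClosed X] [MeasurableSpace X] [BorelSpace X]
  {T : X → X}

lemma lowerSemicontinuous_measure_of_isOpen {W : Set X} (hW : IsOpen W) :
    LowerSemicontinuous fun μ : ProbabilityMeasure X => (μ : Measure X) W :=
  lowerSemicontinuous_iff_le_liminf.2 fun _ =>
    ProbabilityMeasure.le_liminf_measure_open_of_tendsto tendsto_id hW

lemma isClosed_setOf_measurePreserving (hT : Continuous T) :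
    IsClosed {μ : ProbabilityMeasure X | MeasurePreserving T (μ : Measure X) μ} := by
  have h_eq : {μ : ProbabilityMeasure X | MeasurePreserving T (μ : Measure X) μ} =
      {μ | μ.map hT.measurable.aemeasurable = μ} := by
    ext μ
    refine ⟨fun h => Subtype.ext h.map_eq, fun h => ⟨hT.measurable, ?_⟩⟩
    exact congrArg (fun ν : ProbabilityMeasure X => (ν : Measure X)) h
  rw [h_eq]
  exact isClosed_eq (ProbabilityMeasure.continuous_map hT) continuous_id

variable [CompactSpace X] [T2Space X]

/-- Krein–Milman is applied in the space of all real functions of test functions, which unlike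
`Measure X` is a locally convex real vector space. -/
lemma exists_mem_extremePoints_of_isClosed {S : Set (ProbabilityMeasure X)} (hS : IsClosed S)
    (hS_nonempty : S.Nonempty) :
    ∃ μ ∈ S, (μ : Measure X) ∈ extremePoints ℝ≥0∞ ((↑) '' S) := by
  let Φ : ProbabilityMeasure X → BoundedContinuousFunction X ℝ → ℝ := fun μ f => ∫ x, f x ∂μ
  have hΦ : Continuous Φ := continuous_pi fun f => continuous_iff_continuousAt.2 fun μ =>
    ProbabilityMeasure.tendsto_iff_forall_integral_tendsto.1 tendsto_id f
  obtain ⟨_, ⟨μ, hμ, rfl⟩, hμ_ext⟩ :=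
    (hS.isCompact.image hΦ).extremePoints_nonempty (hS_nonempty.image Φ)
  refine ⟨μ, hμ, mem_image_of_mem _ hμ, ?_⟩
  rintro _ ⟨μ₁, hμ₁, rfl⟩ _ ⟨μ₂, hμ₂, rfl⟩ ⟨a, b, ha, hb, hab, h_eq⟩
  have ha_top : a ≠ ∞ := ne_top_of_le_ne_top ENNReal.one_ne_top (hab ▸ le_self_add)
  have hb_top : b ≠ ∞ := ne_top_of_le_ne_top ENNReal.one_ne_top (hab ▸ le_add_self)
  have hΦ_eq : a.toReal • Φ μ₁ + b.toReal • Φ μ₂ = Φ μ := by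
    funext f
    simp only [Φ, Pi.add_apply, Pi.smul_apply, ← h_eq]
    rw [integral_add_measure ((f.integrable _).smul_measure ha_top)
      ((f.integrable _).smul_measure hb_top), integral_smul_measure, integral_smul_measure]
  refine ext_of_forall_integral_eq_of_IsFiniteMeasure fun f => congrFun (?_ : Φ μ₁ = Φ μ) f
  refine hμ_ext (mem_image_of_mem Φ hμ₁) (mem_image_of_mem Φ hμ₂) ⟨a.toReal, b.toReal,
    ENNReal.toReal_pos ha.ne' ha_top, ENNReal.toReal_pos hb.ne' hb_top, ?_, hΦ_eq⟩
  rw [← ENNReal.toReal_add ha_top hb_top, hab, ENNReal.toReal_one]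

/-- Among the invariant measures minimizing the measure of `W`, the extreme ones are ergodic. -/
theorem exists_mem_ergodicMeasures_measure_le (hT : Continuous T) {W : Set X} (hW : IsOpen W)
    {m : ProbabilityMeasure X} (hm : MeasurePreserving T (m : Measure X) m) :
    ∃ μ ∈ ergodicMeasures T, μ W ≤ (m : Measure X) W := by
  let I : Set (ProbabilityMeasure X) := {μ | MeasurePreserving T (μ : Measure X) μ}
  have hI : IsClosed I := isClosed_setOf_measurePreserving hT
  have h_lsc := lowerSemicontinuous_measure_of_isOpen hW
  obtain ⟨ν, hν, hν_min⟩ := (h_lsc.lowerSemicontinuousOn I).exists_isMinOn ⟨m, hm⟩ hI.isCompact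
  have hν_min (μ) (hμ : μ ∈ I) : (ν : Measure X) W ≤ (μ : Measure X) W := hν_min hμ
  obtain ⟨μ, ⟨-, hμν⟩, hμ_ext⟩ := exists_mem_extremePoints_of_isClosed
    (hI.inter (h_lsc.isClosed_preimage ((ν : Measure X) W))) ⟨ν, hν, le_refl ((ν : Measure X) W)⟩
  refine ⟨μ, ⟨inferInstance, Ergodic.of_mem_extremePoints ?_⟩, hμν.trans (hν_min m hm)⟩
  have h_image : (↑) '' (I ∩ {μ : ProbabilityMeasure X | (μ : Measure X) W ≤ (ν : Measure X) W}) =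
      {μ ∈ {μ : Measure X | MeasurePreserving T μ μ ∧ IsProbabilityMeasure μ} |
        μ W ≤ (ν : Measure X) W} := by
    ext μ
    exact ⟨by rintro ⟨μ, ⟨h, hle⟩, rfl⟩; exact ⟨⟨h, inferInstance⟩, hle⟩,
      fun ⟨⟨h, h_prob⟩, hle⟩ => ⟨⟨μ, h_prob⟩, ⟨h, hle⟩, rfl⟩⟩
  refine (isExtreme_setOf_measure_le (measure_ne_top _ W) ?_).extremePoints_subset_extremePoints
    (h_image ▸ hμ_ext)
  exact fun μ ⟨h, h_prob⟩ => hν_min ⟨μ, h_prob⟩ h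

end ErgodicMeasures

section EmpiricalMeasure

open scoped ENNReal

/-- The uniform distribution on the orbit segment `x, T x, …, T^[n - 1] x`, which is counted with
multiplicities. It is a probability measure unless `n = 0`. -/
noncomputable def empiricalMeasure [MeasurableSpace X] (T : X → X) (n : ℕ) (x : X) : Measure X :=
  (n : ℝ≥0∞)⁻¹ • ∑ k ∈ Finset.range n, Measure.dirac (T^[k] x)

section MeasurableSpace

variable [MeasurableSpace X] {T : X → X} {n : ℕ} {x : X}

lemma isProbabilityMeasure_empiricalMeasure (hn : n ≠ 0) :
    IsProbabilityMeasure (empiricalMeasure T n x) := by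
  refine ⟨?_⟩
  simp [empiricalMeasure, ENNReal.inv_mul_cancel (Nat.cast_ne_zero.2 hn) (ENNReal.natCast_ne_top n)]

lemma integral_empiricalMeasure {E : Type*} [NormedAddCommGroup E] [NormedSpace ℝ E]
    [CompleteSpace E] {f : X → E} (hf : StronglyMeasurable f) :
    ∫ y, f y ∂empiricalMeasure T n x = birkhoffAverage ℝ T f n x := by
  rw [empiricalMeasure, integral_smul_measure, integral_finsetSum_measure fun k _ =>
    integrable_dirac' hf enorm_lt_top]
  simp [birkhoffAverage, birkhoffSum, integral_dirac' _ _ hf]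

lemma measureReal_compl_empiricalMeasure {G : Set X} (hG : MeasurableSet G) :
    (empiricalMeasure T n x).real Gᶜ = exitCount T G n x / n := by
  rw [← integral_indicator_one hG.compl,
    integral_empiricalMeasure (stronglyMeasurable_one.indicator hG.compl), birkhoffAverage,
    smul_eq_mul, inv_mul_eq_div, exitCount]

end MeasurableSpace

variable [TopologicalSpace X] [HasOuterApproxClosed X] [MeasurableSpace X] [BorelSpace X]
  {T : X → X}

lemma measurePreserving_of_tendsto_empiricalMeasure (hT : Continuous T) {ι : Type*} {l : Filter ι}
    [l.NeBot] {N : ι → ℕ} (hN : Tendsto N l atTop) {x : ι → X} {e : ι → ProbabilityMeasure X}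
    (he : ∀ i, (e i : Measure X) = empiricalMeasure T (N i) (x i)) {m : ProbabilityMeasure X}
    (hm : Tendsto e l (𝓝 m)) : MeasurePreserving T (m : Measure X) m := by
  have : IsProbabilityMeasure ((m : Measure X).map T) :=
    Measure.isProbabilityMeasure_map hT.measurable.aemeasurable
  refine ⟨hT.measurable, ext_of_forall_integral_eq_of_IsFiniteMeasure fun f => ?_⟩
  rw [integral_map hT.measurable.aemeasurable f.continuous.aestronglyMeasurable]
  have h_integral (g : BoundedContinuousFunction X ℝ) :
      Tendsto (fun i => birkhoffAverage ℝ T g (N i) (x i)) l (𝓝 (∫ y, g y ∂m)) := by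
    refine (ProbabilityMeasure.tendsto_iff_forall_integral_tendsto.1 hm g).congr fun i => ?_
    rw [he, integral_empiricalMeasure g.continuous.stronglyMeasurable]
  have h_comp : Tendsto (fun i => birkhoffAverage ℝ T f (N i) (T (x i))) l (𝓝 (∫ y, f (T y) ∂m)) :=
    (h_integral (f.compContinuous ⟨T, hT⟩)).congr fun i => by
      simp only [birkhoffAverage, birkhoffSum, BoundedContinuousFunction.compContinuous_apply,
        ContinuousMap.coe_mk, ← Function.iterate_succ_apply, Function.iterate_succ_apply']
  refine sub_eq_zero.1 (tendsto_nhds_unique (h_comp.sub (h_integral f)) ?_)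
  obtain ⟨C, hC⟩ := Metric.isBounded_range_iff.1 f.isBounded_range
  have h_bound : Tendsto (fun i => C / (N i : ℝ)) l (𝓝 0) :=
    (tendsto_const_nhds.div_atTop tendsto_natCast_atTop_atTop).comp hN
  refine squeeze_zero_norm (fun i => ?_) h_bound
  rw [← dist_eq_norm, dist_birkhoffAverage_apply_birkhoffAverage]
  gcongr
  exact hC _ _

variable [CompactSpace X] [T2Space X]

lemma exists_measurePreserving_measure_iUnion_le (hT : Continuous T) {N : ℕ → ℕ}
    (hN : ∀ k, k < N k) (x : ℕ → X) {U : ℕ → Set X} (hU : ∀ k, IsOpen (U k)) (hU_mono : Monotone U)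
    {c : ℝ} (h : ∀ k, c * N k ≤ exitCount T (U k) (N k) (x k)) :
    ∃ m : ProbabilityMeasure X, MeasurePreserving T (m : Measure X) m ∧
      (m : Measure X) (⋃ k, U k) ≤ ENNReal.ofReal (1 - c) := by
  have h_prob (k : ℕ) : IsProbabilityMeasure (empiricalMeasure T (N k) (x k)) :=
    isProbabilityMeasure_empiricalMeasure (Nat.ne_zero_of_lt (hN k))
  let e : ℕ → ProbabilityMeasure X := fun k => ⟨empiricalMeasure T (N k) (x k), h_prob k⟩
  obtain ⟨m, -, hm⟩ := isCompact_univ.ultrafilter_le_nhds ((hyperfilter ℕ).map e) (by simp)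
  have hm : Tendsto e (hyperfilter ℕ) (𝓝 m) := hm
  have hN_tendsto : Tendsto N (hyperfilter ℕ) atTop :=
    (tendsto_atTop_mono (fun k => (hN k).le) tendsto_id).mono_left Nat.hyperfilter_le_atTop
  refine ⟨m, measurePreserving_of_tendsto_empiricalMeasure hT hN_tendsto (fun _ => rfl) hm, ?_⟩
  have h_le (k : ℕ) : (e k : Measure X) (U k) ≤ ENNReal.ofReal (1 - c) := by
    rw [← ofReal_measureReal]
    refine ENNReal.ofReal_le_ofReal ?_
    have h_compl : c ≤ (e k : Measure X).real (U k)ᶜ := by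
      refine (le_div_iff₀ (mod_cast (Nat.zero_le k).trans_lt (hN k))).2 (h k) |>.trans_eq ?_
      exact (measureReal_compl_empiricalMeasure (hU k).measurableSet).symm
    linarith [probReal_add_probReal_compl (μ := (e k : Measure X)) (hU k).measurableSet]
  rw [hU_mono.measure_iUnion]
  refine iSup_le fun j => (ProbabilityMeasure.le_liminf_measure_open_of_tendsto hm (hU j)).trans ?_
  refine liminf_le_of_frequently_le' (Eventually.frequently ?_)
  filter_upwards [Nat.hyperfilter_le_atTop (eventually_ge_atTop j)] with k hk
  exact (measure_mono (hU_mono hk)).trans (h_le k)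

lemma ergodicMeasures_nonempty [Nonempty X] (hT : Continuous T) : (ergodicMeasures T).Nonempty := by
  obtain ⟨m, hm, -⟩ := exists_measurePreserving_measure_iUnion_le hT Nat.lt_succ_self
    (fun _ => Classical.arbitrary X) (fun _ => isOpen_empty) monotone_const (c := 0) fun k => by
      simpa using exitCount_nonneg T ∅ _ _
  obtain ⟨μ, hμ, -⟩ := exists_mem_ergodicMeasures_measure_le hT isOpen_empty hm
  exact ⟨μ, hμ⟩

/-- Otherwise the empirical measures of orbits violating the bound would accumulate at an invariant
measure giving too little mass to `⋃ k, U k`, hence so would an ergodic measure. -/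
theorem exists_eventually_fewExits_eq_univ (hT : Continuous T) {U : ℕ → Set X}
    (hU : ∀ k, IsOpen (U k)) (hU_mono : Monotone U) {c : ℝ}
    (h : ∀ μ ∈ ergodicMeasures T, ENNReal.ofReal (1 - c) < μ (⋃ k, U k)) :
    ∃ k, ∀ᶠ N : ℕ in atTop, fewExits T (U k) N (c * N) = univ := by
  by_contra! h_freq
  have h_exists (k : ℕ) : ∃ N > k, ∃ x, c * N ≤ exitCount T (U k) N x := by
    obtain ⟨N, hN, hkN⟩ := ((h_freq k).and_eventually (eventually_gt_atTop k)).exists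
    obtain ⟨x, hx⟩ := (ne_univ_iff_exists_notMem _).1 hN
    exact ⟨N, hkN, x, not_lt.1 hx⟩
  choose N hN x hx using h_exists
  obtain ⟨m, hm, hmU⟩ := exists_measurePreserving_measure_iUnion_le hT hN x hU hU_mono hx
  obtain ⟨μ, hμ, hμm⟩ := exists_mem_ergodicMeasures_measure_le hT (isOpen_iUnion hU) hm
  exact (h μ hμ).not_ge (hμm.trans hmU)

end EmpiricalMeasure

section Covers

variable [TopologicalSpace X] [HasOuterApproxClosed X] [CompactSpace X] [T2Space X]
  [MeasurableSpace X] [BorelSpace X]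

theorem exists_eventually_dynCoverable_univ {T : X → X} (hT : Continuous T) {U : SetRel X X}
    {s t c : ℝ} (hs : 0 ≤ s) (ht : 0 ≤ t) (hX : DynCoverable T U 1 univ (Real.exp s / 2))
    {L : ℕ → ℕ} {V : ℕ → Set X} {w : ℕ → ℝ} (hL : ∀ j, 1 ≤ L j) (hV_open : ∀ j, IsOpen (V j))
    (hw : ∀ j, 0 ≤ w j) (hw_sum : ∀ n, ∑ j ∈ Finset.range n, w j ≤ 1 / 2)
    (hV : ∀ j, DynCoverable T U (L j) (V j) (w j * Real.exp (L j * t)))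
    (h : ∀ μ ∈ ergodicMeasures T, ENNReal.ofReal (1 - c) < μ (⋃ j, V j)) :
    ∃ K > 0, ∀ᶠ N : ℕ in atTop, DynCoverable T U N univ (K * Real.exp (N * (t + c * s))) := by
  let W : ℕ → Set X := fun k => ⋃ j ∈ Finset.range k, V j
  have hW_open (k : ℕ) : IsOpen (W k) := isOpen_biUnion fun j _ => hV_open j
  have hW_mono : Monotone W := fun k l hkl =>
    biUnion_subset_biUnion_left (Finset.range_subset_range.2 hkl)
  have hVW : ⋃ j, V j ⊆ ⋃ k, W k := iUnion_subset fun j =>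
    (subset_biUnion_of_mem (u := V) (Finset.self_mem_range_succ j)).trans (subset_iUnion W (j + 1))
  obtain ⟨k, hk⟩ := exists_eventually_fewExits_eq_univ hT hW_open hW_mono (c := c) fun μ hμ =>
    (h μ hμ).trans_le (measure_mono hVW)
  have h_pos (j : ℕ) : 0 ≤ Real.exp (L j * t) := (Real.exp_pos _).le
  let K : ℝ := 1 + ∑ j ∈ Finset.range k, Real.exp (L j * t)
  have hK : 1 ≤ K := le_add_of_nonneg_right (Finset.sum_nonneg fun j _ => h_pos j)
  have hLK (j) (hj : j ∈ Finset.range k) : Real.exp (L j * t) ≤ K :=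
    (Finset.single_le_sum (fun j _ => h_pos j) hj).trans (le_add_of_nonneg_left zero_le_one)
  refine ⟨K, by linarith, hk.mono fun N hN => hN ▸ ?_⟩
  refine (DynCoverable.fewExits_biUnion _ hs ht hK hX (fun j _ => hL j) (fun j _ => hw j)
    (hw_sum k) (fun j _ => hV j) hLK N (c * N)).mono le_rfl le_rfl (le_of_eq ?_)
  ring_nf

end Covers

section HeavySet

variable [MetricSpace X] [MeasurableSpace X] {T : X → X} {μ : Measure X} {n : ℕ} {ε b : ℝ}

/-- The points whose dynamical ball of length `n` and radius `ε` has measure at least `b`. -/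
def heavySet (T : X → X) (μ : Measure X) (n : ℕ) (ε b : ℝ) : Set X :=
  {x | b ≤ μ.real (dynBall T n x ε)}

variable [OpensMeasurableSpace X] [IsProbabilityMeasure μ]

/-- The balls of radius `ε` around the points of `E` are disjoint. -/
lemma card_le_inv_of_subset_heavySet (hT : Continuous T) (hε : 0 < ε) (hb : 0 < b) {E : Finset X}
    (hE_heavy : ↑E ⊆ heavySet T μ n ε b)
    (hE : ∀ x ∈ E, ∀ y ∈ E, x ≠ y → 2 * ε < dynDist T n x y) : (E.card : ℝ) ≤ b⁻¹ := by
  have h_disj : (E : Set X).PairwiseDisjoint fun x => dynBall T n x ε := by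
    refine fun x hx y hy hxy => disjoint_left.2 fun z hxz hyz => ?_
    have hxz : dynDist T n x z < ε := hxz
    have hyz : dynDist T n y z < ε := hyz
    linarith [hE x hx y hy hxy, dynDist_triangle T n x z y, dynDist_comm T n y z]
  rw [← one_div, le_div_iff₀ hb]
  calc (E.card : ℝ) * b = E.card • b := (nsmul_eq_mul _ _).symm
    _ ≤ ∑ x ∈ E, μ.real (dynBall T n x ε) := Finset.card_nsmul_le_sum _ _ _ fun x hx => hE_heavy hx
    _ = μ.real (⋃ x ∈ E, dynBall T n x ε) :=
      (measureReal_biUnion_finset h_disj fun x _ => (isOpen_dynBall hT n x hε).measurableSet).symm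
    _ ≤ 1 := measureReal_le_one

lemma exists_finset_heavySet_subset (hT : Continuous T) (hε : 0 < ε) (hb : 0 < b) {D : Finset X}
    (hD : ⋃ y ∈ D, dynBall T n y ε = univ) :
    ∃ C ⊆ D, (C.card : ℝ) ≤ b⁻¹ ∧ heavySet T μ n ε b ⊆ ⋃ y ∈ C, dynBall T n y (3 * ε) := by
  classical
  obtain ⟨E, hE_heavy, hE, hE_span⟩ := exists_finset_separated_spanning (T := T) (n := n)
    (A := heavySet T μ n ε b) (c := ⌊b⁻¹⌋₊) (mul_nonneg zero_le_two hε.le) fun E hE_heavy hE =>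
      Nat.le_floor (card_le_inv_of_subset_heavySet hT hε hb hE_heavy hE)
  have h_exists (x : X) : ∃ y ∈ D, x ∈ dynBall T n y ε := by
    simpa using hD.ge (mem_univ x)
  choose f hfD hf using h_exists
  refine ⟨E.image f, Finset.image_subset_iff.2 fun x _ => hfD x, ?_, fun x hx => ?_⟩
  · exact (mod_cast Finset.card_image_le : ((E.image f).card : ℝ) ≤ E.card).trans
      (card_le_inv_of_subset_heavySet hT hε hb hE_heavy hE)
  · obtain ⟨y, hyE, hxy⟩ := hE_span x hx
    refine mem_biUnion (Finset.mem_image_of_mem f hyE) (show dynDist T n (f y) x < 3 * ε from ?_)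
    have hfy : dynDist T n (f y) y < ε := hf y
    linarith [dynDist_triangle T n (f y) y x, dynDist_comm T n x y]

lemma eventually_exists_finset_measureReal_compl_le (hT : Continuous T) (hε : 0 < ε) {t : ℝ}
    (h : ∀ᵐ x ∂μ, ∀ᶠ n : ℕ in atTop, x ∈ heavySet T μ n ε (Real.exp (-(n * t))))
    {D : ℕ → Finset X} (hD : ∀ n, ⋃ y ∈ D n, dynBall T n y ε = univ) {r : ℝ} (hr : 0 < r) :
    ∀ᶠ n : ℕ in atTop, ∃ C ⊆ D n, (C.card : ℝ) ≤ Real.exp (n * t) ∧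
      μ.real (⋃ y ∈ C, dynBall T n y (3 * ε))ᶜ ≤ r := by
  choose C hCD hC_card hC_heavy using fun n : ℕ =>
    exists_finset_heavySet_subset (μ := μ) hT hε (Real.exp_pos (-(n * t))) (hD n)
  let W : ℕ → Set X := fun n => ⋃ y ∈ C n, dynBall T n y (3 * ε)
  have hW_meas (n : ℕ) : MeasurableSet (W n) :=
    (isOpen_biUnion fun y _ => isOpen_dynBall hT n y (by positivity)).measurableSet
  have h_tendsto : Tendsto (fun n => μ (W n)ᶜ) atTop (𝓝 (μ ∅)) := by
    refine tendsto_measure_of_ae_tendsto_indicator_of_isFiniteMeasure atTop MeasurableSet.empty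
      (fun n => (hW_meas n).compl) ?_
    filter_upwards [h] with x hx
    filter_upwards [hx] with n hn
    simpa [W] using hC_heavy n hn
  rw [measure_empty] at h_tendsto
  filter_upwards [h_tendsto.eventually_le_const (ENNReal.ofReal_pos.2 hr)] with n hn
  refine ⟨C n, hCD n, by simpa only [Real.exp_neg, inv_inv] using hC_card n, ?_⟩
  exact ENNReal.toReal_le_of_le_ofReal hr.le hn

end HeavySet

section SojournSet

variable [MetricSpace X] {T : X → X} {D : Finset X} {n L : ℕ} {ε q b δ η s t : ℝ}

/-- The points whose orbit leaves some union of at most `q` dynamical balls of length `n` and radius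
`ε`, centered at points of `D`, fewer than `b` times before time `L`. -/
def sojournSet (T : X → X) (D : Finset X) (n : ℕ) (ε q : ℝ) (L : ℕ) (b : ℝ) : Set X :=
  ⋃ C ∈ {C ∈ D.powerset | (C.card : ℝ) ≤ q}, fewExits T (⋃ y ∈ C, dynBall T n y ε) L b

lemma isOpen_sojournSet (hT : Continuous T) (hε : 0 < ε) : IsOpen (sojournSet T D n ε q L b) :=
  isOpen_biUnion fun _ _ =>
    isOpen_fewExits hT (isOpen_biUnion fun y _ => isOpen_dynBall hT n y hε) L b

lemma one_sub_le_measureReal_sojournSet [MeasurableSpace X] [OpensMeasurableSpace X] {μ : Measure X}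
    [IsProbabilityMeasure μ] (hT : Continuous T) (hμ : MeasurePreserving T μ μ) (hε : 0 < ε)
    (hL : 1 ≤ L) (hδ : 0 < δ) {C : Finset X} (hCD : C ⊆ D) (hC_card : (C.card : ℝ) ≤ q)
    (hC : μ.real (⋃ y ∈ C, dynBall T n y ε)ᶜ ≤ δ ^ 2) :
    1 - δ ≤ μ.real (sojournSet T D n ε q L (δ * L)) := by
  have h_meas : MeasurableSet (⋃ y ∈ C, dynBall T n y ε) :=
    (isOpen_biUnion fun y _ => isOpen_dynBall hT n y hε).measurableSet
  refine (one_sub_le_measureReal_fewExits hμ h_meas hL hδ hC).trans (measureReal_mono ?_)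
  exact subset_biUnion_of_mem (u := fun C : Finset X => fewExits T (⋃ y ∈ C, dynBall T n y ε) L _)
    (Finset.mem_filter.2 ⟨Finset.mem_powerset.2 hCD, hC_card⟩)

lemma DynCoverable.sojournSet (hs : 0 ≤ s) (ht : 0 ≤ t) (hη : 0 ≤ η) (hn : 1 ≤ n)
    (hnη : Real.exp (-(n * η)) ≤ 1 / 2)
    (hX : DynCoverable T {p | dist p.1 p.2 ≤ 2 * ε} 1 univ (Real.exp s / 2)) (L : ℕ) (b : ℝ) :
    DynCoverable T {p | dist p.1 p.2 ≤ 2 * ε} L (sojournSet T D n ε (Real.exp (n * t)) L b)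
      (2 ^ D.card * (Real.exp (n * (t + η)) * Real.exp (L * (t + η) + b * s))) := by
  refine (DynCoverable.biUnion _ fun C hC => DynCoverable.fewExits hs (add_nonneg ht hη) hn hX
    ((DynCoverable.biUnion_dynBall T n C ε).mono le_rfl le_rfl ?_) L b).mono le_rfl le_rfl ?_
  · calc (C.card : ℝ) ≤ Real.exp (n * t) := (Finset.mem_filter.1 hC).2
      _ = Real.exp (n * (t + η)) * Real.exp (-(n * η)) := by rw [← Real.exp_add]; ring_nf
      _ ≤ Real.exp (n * (t + η)) / 2 := by rw [div_eq_mul_one_div]; gcongr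
  · rw [Finset.sum_const, nsmul_eq_mul]
    gcongr
    exact_mod_cast (Finset.card_filter_le _ _).trans (Finset.card_powerset D).le

lemma exists_dynCoverable_sojournSet (hs : 0 ≤ s) (ht : 0 ≤ t) (hη : 0 < η) (hδη : δ * s = η)
    (hn : 1 ≤ n) (hnη : Real.exp (-(n * η)) ≤ 1 / 2)
    (hX : DynCoverable T {p | dist p.1 p.2 ≤ 2 * ε} 1 univ (Real.exp s / 2)) {w : ℝ} (hw : 0 < w) :
    ∃ L : ℕ, 1 ≤ L ∧ DynCoverable T {p | dist p.1 p.2 ≤ 2 * ε} L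
      (sojournSet T D n ε (Real.exp (n * t)) L (δ * L)) (w * Real.exp (L * (t + 3 * η))) := by
  have h_tendsto : Tendsto (fun L : ℕ => Real.exp (L * η)) atTop atTop :=
    Real.tendsto_exp_atTop.comp (tendsto_natCast_atTop_atTop.atTop_mul_const hη)
  obtain ⟨L, hL, hLw⟩ := ((eventually_ge_atTop 1).and
    (h_tendsto.eventually_ge_atTop (2 ^ D.card * Real.exp (n * (t + η)) / w))).exists
  refine ⟨L, hL, (DynCoverable.sojournSet hs ht hη.le hn hnη hX L (δ * L)).mono le_rfl le_rfl ?_⟩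
  rw [div_le_iff₀' hw] at hLw
  calc 2 ^ D.card * (Real.exp (n * (t + η)) * Real.exp (L * (t + η) + δ * L * s))
      = 2 ^ D.card * Real.exp (n * (t + η)) * Real.exp (L * (t + 2 * η)) := by
        rw [← hδη]; ring_nf
    _ ≤ w * Real.exp (L * η) * Real.exp (L * (t + 2 * η)) := by gcongr
    _ = w * Real.exp (L * (t + 3 * η)) := by rw [mul_assoc, ← Real.exp_add]; ring_nf

end SojournSet

section HeavySet

variable [MetricSpace X] [MeasurableSpace X] {T : X → X} {ε t : ℝ}

lemma eventually_one_sub_le_measureReal_sojournSet [OpensMeasurableSpace X] {μ : Measure X}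
    [IsProbabilityMeasure μ] (hT : Continuous T) (hμ : MeasurePreserving T μ μ) (hε : 0 < ε)
    (h : ∀ᵐ x ∂μ, ∀ᶠ n : ℕ in atTop, x ∈ heavySet T μ n ε (Real.exp (-(n * t))))
    {D : ℕ → Finset X} (hD : ∀ n, ⋃ y ∈ D n, dynBall T n y ε = univ) {δ : ℝ} (hδ : 0 < δ) :
    ∀ᶠ n : ℕ in atTop, ∀ L : ℕ, 1 ≤ L →
      1 - δ ≤ μ.real (sojournSet T (D n) n (3 * ε) (Real.exp (n * t)) L (δ * L)) := by
  filter_upwards [eventually_exists_finset_measureReal_compl_le hT hε h hD (sq_pos_of_pos hδ)]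
    with n ⟨C, hCD, hC_card, hC⟩ L hL
  exact one_sub_le_measureReal_sojournSet hT hμ (by positivity) hL hδ hCD hC_card hC

/-- Leaving a large set a fraction `2 * δ` of the time costs `exp (2 * δ * s)` per unit of time, so
`δ` is chosen with `δ * s = η`. -/
theorem exists_eventually_dynCoverable_univ_of_heavySet [CompactSpace X] [BorelSpace X]
    (hT : Continuous T) (hε : 0 < ε) (ht : 0 ≤ t)
    (h : ∀ μ ∈ ergodicMeasures T,
      ∀ᵐ x ∂μ, ∀ᶠ n : ℕ in atTop, x ∈ heavySet T μ n ε (Real.exp (-(n * t))))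
    {η : ℝ} (hη : 0 < η) :
    ∃ K > 0, ∀ᶠ N : ℕ in atTop,
      DynCoverable T {p | dist p.1 p.2 ≤ 6 * ε} N univ (K * Real.exp (N * (t + 5 * η))) := by
  rw [show 6 * ε = 2 * (3 * ε) by ring]
  obtain ⟨a, ha⟩ := DynCoverable.exists_univ hT 1 (show 0 < 2 * (3 * ε) by positivity)
  obtain ⟨s, hηs, has⟩ := ((eventually_gt_atTop η).and
    (Real.tendsto_exp_atTop.eventually_ge_atTop (2 * a))).exists
  obtain ⟨m, hm⟩ := (Real.tendsto_exp_neg_atTop_nhds_zero.comp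
    (tendsto_natCast_atTop_atTop.atTop_mul_const hη)).eventually_le_const
      one_half_pos |>.exists_forall_of_atTop
  have hs : 0 < s := hη.trans hηs
  have hX := ha.mono le_rfl le_rfl (show a ≤ Real.exp s / 2 by linarith)
  have hδη : η / s * s = η := div_mul_cancel₀ η hs.ne'
  have hδ : 0 < η / s := by positivity
  have hδ_lt : η / s < 1 := (div_lt_one hs).2 hηs
  choose D hD using fun n => exists_finset_iUnion_dynBall_eq_univ hT n hε
  choose L hL hV using fun j : ℕ => exists_dynCoverable_sojournSet (D := D (j + (m + 1)))
    hs.le ht hη hδη (show 1 ≤ j + (m + 1) by omega) (hm _ (by omega)) hX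
    (show 0 < (1 / 2 : ℝ) ^ (j + 2) by positivity)
  have hw (n : ℕ) : ∑ j ∈ Finset.range n, (1 / 2 : ℝ) ^ (j + 2) ≤ 1 / 2 := by
    simp only [pow_add, ← Finset.sum_mul]
    linarith [sum_geometric_two_le n]
  obtain ⟨K, hK, hK_cover⟩ := exists_eventually_dynCoverable_univ (c := 2 * (η / s)) hT hs.le
    (by positivity) hX hL (fun j => isOpen_sojournSet hT (by positivity))
    (fun j => by positivity) hw hV fun μ hμ => by
      have : IsProbabilityMeasure μ := hμ.1
      obtain ⟨j, hj⟩ := ((tendsto_add_atTop_nat (m + 1)).eventually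
        (eventually_one_sub_le_measureReal_sojournSet hT hμ.2.toMeasurePreserving hε (h μ hμ) hD
          hδ)).exists
      refine lt_of_lt_of_le ?_ (measure_mono (subset_iUnion _ j))
      rw [← ofReal_measureReal, ENNReal.ofReal_lt_ofReal_iff] <;> linarith [hj (L j) (hL j)]
  refine ⟨K, hK, hK_cover.mono fun N hN => hN.mono le_rfl le_rfl (le_of_eq ?_)⟩
  rw [mul_assoc 2, hδη]
  ring_nf

end HeavySet

section Entropy

variable [MetricSpace X] {T : X → X} {ε : ℝ}

lemma sepEnt_le_of_eventually_dynCoverable (hε : 0 ≤ ε) {K s : ℝ} (hK : 0 < K) (hs : 0 ≤ s)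
    {A : Set X}
    (h : ∀ᶠ N : ℕ in atTop,
      DynCoverable T {p | dist p.1 p.2 ≤ ε} N A (K * Real.exp (N * s))) :
    sepEnt T A ε ≤ s := by
  refine EReal.le_of_forall_lt_iff_le.1 fun z hsz => limsup_le_of_le (by isBoundedDefault) ?_
  have hsz : 0 < z - s := sub_pos.2 (mod_cast hsz)
  filter_upwards [h, (tendsto_const_div_atTop_nhds_zero_nat (Real.log K)).eventually_le_const hsz,
    eventually_gt_atTop 0] with N hN hKN hN_pos
  have hN_pos : (0 : ℝ) < N := mod_cast hN_pos
  rw [EReal.coe_le_coe_iff, div_le_iff₀ hN_pos]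
  rw [div_le_iff₀ hN_pos] at hKN
  obtain h_zero | h_pos := (sepNum T N A ε).eq_zero_or_pos
  · rw [h_zero, Nat.cast_zero, Real.log_zero]
    exact mul_nonneg (by linarith) hN_pos.le
  calc Real.log (sepNum T N A ε) ≤ Real.log (K * Real.exp (N * s)) :=
        Real.log_le_log (mod_cast h_pos) (hN.sepNum_le hε)
    _ = Real.log K + N * s := by rw [Real.log_mul hK.ne' (Real.exp_pos _).ne', Real.log_exp]
    _ ≤ z * N := by linarith

lemma eventually_sepNum_le_exp_of_sepEnt_lt {A : Set X} {a : ℝ} (h : sepEnt T A ε < a) :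
    ∀ᶠ n : ℕ in atTop, (sepNum T n A ε : ℝ) ≤ Real.exp (n * a) := by
  filter_upwards [eventually_lt_of_limsup_lt h, eventually_gt_atTop 0] with n hn hn_pos
  rw [EReal.coe_lt_coe_iff, div_lt_iff₀ (by exact_mod_cast hn_pos)] at hn
  exact Real.le_exp_of_log_le (by linarith)

variable [MeasurableSpace X] {μ : Measure X} [IsProbabilityMeasure μ]

lemma neg_log_div_le_iff_mem_heavySet {n : ℕ} (hn : 0 < n) {x : X} {t : ℝ} :
    -ENNReal.log (μ (dynBall T n x ε)) / n ≤ t ↔ x ∈ heavySet T μ n ε (Real.exp (-(n * t))) := by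
  have h_log : ENNReal.log (ENNReal.ofReal (Real.exp (-(n * t)))) = -((n * t : ℝ) : EReal) := by
    rw [ENNReal.log_ofReal_of_pos (Real.exp_pos _), Real.log_exp, EReal.coe_neg]
  rw [EReal.div_le_iff_le_mul (by exact_mod_cast hn) (EReal.natCast_ne_top n), EReal.neg_le,
    ← EReal.coe_natCast, ← EReal.coe_mul, ← h_log, ENNReal.log_le_log_iff,
    ENNReal.ofReal_le_iff_le_toReal (measure_ne_top _ _)]
  rfl

lemma brinKatok_nonneg (x : X) : 0 ≤ brinKatok T μ x ε := by
  refine le_limsup_of_frequently_le (Frequently.of_forall fun n => ?_) (by isBoundedDefault)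
  refine EReal.div_nonneg (EReal.neg_nonneg.2 ?_) n.cast_nonneg'
  exact ENNReal.log_one ▸ ENNReal.log_monotone prob_le_one

lemma brinKatok_le_of_eventually_mem_heavySet {x : X} {t : ℝ}
    (h : ∀ᶠ n : ℕ in atTop, x ∈ heavySet T μ n ε (Real.exp (-(n * t)))) :
    brinKatok T μ x ε ≤ t := by
  refine limsup_le_of_le (by isBoundedDefault) ?_
  filter_upwards [h, eventually_gt_atTop 0] with n hn hn_pos
  exact (neg_log_div_le_iff_mem_heavySet hn_pos).2 hn

lemma eventually_mem_heavySet_of_brinKatok_lt {x : X} {t : ℝ} (h : brinKatok T μ x ε < t) :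
    ∀ᶠ n : ℕ in atTop, x ∈ heavySet T μ n ε (Real.exp (-(n * t))) := by
  filter_upwards [eventually_lt_of_limsup_lt h, eventually_gt_atTop 0] with n hn hn_pos
  exact (neg_log_div_le_iff_mem_heavySet hn_pos).1 hn.le

variable [CompactSpace X]

lemma iSup_essSup_brinKatok_nonneg [Nonempty X] [BorelSpace X] (hT : Continuous T) :
    0 ≤ ⨆ μ ∈ ergodicMeasures T, essSup (fun x => brinKatok T μ x ε) μ := by
  obtain ⟨μ, hμ⟩ := ergodicMeasures_nonempty hT
  have : IsProbabilityMeasure μ := hμ.1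
  calc (0 : EReal) = essSup (fun _ => 0) μ := (essSup_const 0 (NeZero.ne μ)).symm
    _ ≤ essSup (fun x => brinKatok T μ x ε) μ :=
      essSup_mono_ae (Eventually.of_forall brinKatok_nonneg)
    _ ≤ _ := le_iSup₂ (f := fun μ (_ : μ ∈ ergodicMeasures T) =>
      essSup (fun x => brinKatok T μ x ε) μ) μ hμ

theorem sepEnt_le_iSup_essSup_brinKatok [Nonempty X] [BorelSpace X] (hT : Continuous T)
    (hε : 0 < ε) :
    sepEnt T univ (6 * ε) ≤ ⨆ μ ∈ ergodicMeasures T, essSup (fun x => brinKatok T μ x ε) μ := by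
  refine EReal.le_of_forall_lt_iff_le.1 fun t ht => EReal.le_of_forall_lt_iff_le.1 fun z hz => ?_
  have ht_nonneg : 0 ≤ t := mod_cast (iSup_essSup_brinKatok_nonneg hT).trans ht.le
  have htz : 0 < (z - t) / 5 := div_pos (sub_pos.2 (mod_cast hz)) (by norm_num)
  obtain ⟨K, hK, hK_cover⟩ := exists_eventually_dynCoverable_univ_of_heavySet hT hε ht_nonneg
    (fun μ hμ => by
      have : IsProbabilityMeasure μ := hμ.1
      have h_lt : essSup (fun x => brinKatok T μ x ε) μ < t := (le_iSup₂ (f := fun μ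
        (_ : μ ∈ ergodicMeasures T) => essSup (fun x => brinKatok T μ x ε) μ) μ hμ).trans_lt ht
      exact (ae_lt_of_essSup_lt h_lt).mono fun x => eventually_mem_heavySet_of_brinKatok_lt) htz
  rw [show z = t + 5 * ((z - t) / 5) by ring]
  exact sepEnt_le_of_eventually_dynCoverable (by positivity) hK (by positivity) hK_cover

lemma measure_compl_heavySet_le (hT : Continuous T) (hε : 0 < ε) (n : ℕ) (b : ℝ) :
    μ (heavySet T μ n (2 * ε) b)ᶜ ≤ ENNReal.ofReal (sepNum T n univ ε * b) := by
  obtain ⟨E, hE_light, hE, hE_span⟩ := exists_finset_separated_spanning hε.le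
    fun E (_ : ↑E ⊆ (heavySet T μ n (2 * ε) b)ᶜ) hE =>
      card_le_sepNum hT hε (subset_univ (E : Set X)) hE
  have h_subset : (heavySet T μ n (2 * ε) b)ᶜ ⊆ ⋃ y ∈ E, dynBall T n y (2 * ε) := fun x hx => by
    obtain ⟨y, hyE, hxy⟩ := hE_span x hx
    refine mem_biUnion hyE (show dynDist T n y x < 2 * ε from ?_)
    linarith [dynDist_comm T n x y]
  calc μ (heavySet T μ n (2 * ε) b)ᶜ ≤ ∑ y ∈ E, μ (dynBall T n y (2 * ε)) :=
        (measure_mono h_subset).trans (measure_biUnion_finset_le _ _)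
    _ ≤ ∑ _ ∈ E, ENNReal.ofReal b := by
        refine Finset.sum_le_sum fun y hy => ?_
        have h_light : μ.real (dynBall T n y (2 * ε)) < b := not_le.1 (hE_light hy)
        exact (ofReal_measureReal (μ := μ)).ge.trans (ENNReal.ofReal_le_ofReal h_light.le)
    _ = E.card * ENNReal.ofReal b := by rw [Finset.sum_const, nsmul_eq_mul]
    _ ≤ sepNum T n univ ε * ENNReal.ofReal b := by
        gcongr
        exact card_le_sepNum hT hε (subset_univ _) hE
    _ = ENNReal.ofReal (sepNum T n univ ε * b) := by
        rw [ENNReal.ofReal_mul (Nat.cast_nonneg _), ENNReal.ofReal_natCast]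

/-- By Borel–Cantelli, almost every point has eventually heavy balls. -/
theorem essSup_brinKatok_le_sepEnt (hT : Continuous T) (hε : 0 < ε) :
    essSup (fun x => brinKatok T μ x (2 * ε)) μ ≤ sepEnt T univ ε := by
  refine EReal.le_of_forall_lt_iff_le.1 fun a ha => ?_
  obtain ⟨a', ha', haa'⟩ := EReal.lt_iff_exists_real_btwn.1 ha
  have haa' : a' - a < 0 := sub_neg.2 (mod_cast haa')
  let A : ℕ → Set X := fun n => (heavySet T μ n (2 * ε) (Real.exp (-(n * a))))ᶜ
  have hA : ∀ᶠ n : ℕ in atTop, μ (A n) ≤ ENNReal.ofReal (Real.exp (a' - a) ^ n) := by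
    filter_upwards [eventually_sepNum_le_exp_of_sepEnt_lt ha'] with n hn
    refine (measure_compl_heavySet_le hT hε n _).trans (ENNReal.ofReal_le_ofReal ?_)
    calc sepNum T n univ ε * Real.exp (-(n * a)) ≤ Real.exp (n * a') * Real.exp (-(n * a)) := by
          gcongr
      _ = Real.exp (a' - a) ^ n := by rw [← Real.exp_add, ← Real.exp_nat_mul]; ring_nf
  obtain ⟨N, hN⟩ := hA.exists_forall_of_atTop
  have h_summable : Summable fun n => Real.exp (a' - a) ^ (n + N) := (summable_nat_add_iff N).2
    (summable_geometric_of_lt_one (Real.exp_pos _).le (Real.exp_lt_one_iff.2 haa'))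
  have h_tsum : ∑' n, μ (A (n + N)) ≠ ⊤ := ne_top_of_le_ne_top h_summable.tsum_ofReal_ne_top
    (ENNReal.tsum_le_tsum fun n => hN (n + N) (Nat.le_add_left N n))
  refine essSup_le_of_ae_le _ ((ae_eventually_notMem h_tsum).mono fun x hx => ?_)
  rw [← eventually_map (m := (· + N)) (P := fun n => x ∉ A n), map_add_atTop_eq_nat] at hx
  exact brinKatok_le_of_eventually_mem_heavySet (hx.mono fun n => not_not.1)

end Entropy

section MeanDimension

lemma tendsto_log_one_div_nhdsGT_zero :
    Tendsto (fun ε : ℝ => Real.log (1 / ε)) (𝓝[>] 0) atTop := by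
  simp only [one_div]
  exact Real.tendsto_log_atTop.comp tendsto_inv_nhdsGT_zero

/-- Since `log (1 / (c * ε)) = log (1 / ε) - log c`, the constant `c` is invisible in the limit. -/
lemma liminf_div_log_le_of_forall_const_mul_le {F G : ℝ → EReal} {c : ℝ} (hc : 0 < c)
    (h : ∀ ε > 0, F (c * ε) ≤ G ε) :
    liminf (fun ε : ℝ => F ε / (Real.log (1 / ε) : ℝ)) (𝓝[>] 0) ≤
      liminf (fun ε : ℝ => G ε / (Real.log (1 / ε) : ℝ)) (𝓝[>] 0) := by
  refine EReal.ge_of_forall_gt_iff_ge.1 fun a ha => EReal.ge_of_forall_gt_iff_ge.1 fun b hba => ?_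
  have hba : 0 < a - b := sub_pos.2 (mod_cast hba)
  have h_log := tendsto_log_one_div_nhdsGT_zero
  refine le_liminf_of_le (by isBoundedDefault) ?_
  filter_upwards [eventually_nhdsGT_zero_mul_left hc (eventually_lt_of_lt_liminf ha),
    self_mem_nhdsWithin, h_log.eventually_gt_atTop 0,
    eventually_nhdsGT_zero_mul_left hc (h_log.eventually_gt_atTop 0),
    h_log.eventually_ge_atTop (a * Real.log c / (a - b))] with ε haF hε h_pos hc_pos h_large
  have hε : 0 < ε := hε
  have h_split : Real.log (1 / (c * ε)) = Real.log (1 / ε) - Real.log c := by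
    rw [one_div, one_div, Real.log_inv, Real.log_inv, Real.log_mul hc.ne' hε.ne']
    ring
  rw [div_le_iff₀ hba] at h_large
  rw [EReal.le_div_iff_mul_le (by exact_mod_cast h_pos) (EReal.coe_ne_top _)]
  calc (b : EReal) * (Real.log (1 / ε) : ℝ) ≤ a * (Real.log (1 / (c * ε)) : ℝ) := by
        rw [← EReal.coe_mul, ← EReal.coe_mul, EReal.coe_le_coe_iff, h_split]
        linarith
    _ ≤ F (c * ε) :=
        (EReal.le_div_iff_mul_le (by exact_mod_cast hc_pos) (EReal.coe_ne_top _)).1 haF.le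
    _ ≤ G ε := h ε hε

end MeanDimension

theorem lower_mdim_eq_liminf_brinKatok_general [MetricSpace X] [CompactSpace X] [Nonempty X]
    [MeasurableSpace X] [BorelSpace X] (T : X → X) (hT : Continuous T) :
    mdimLower T = liminf (fun ε : ℝ =>
      (⨆ μ ∈ ergodicMeasures T, essSup (fun x => brinKatok T μ x ε) μ)
        / ((Real.log (1 / ε) : ℝ) : EReal)) (𝓝[>] (0:ℝ)) := by
  refine le_antisymm ?_ ?_
  · exact liminf_div_log_le_of_forall_const_mul_le (c := 6) (by norm_num) fun ε hε =>
      sepEnt_le_iSup_essSup_brinKatok hT hε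
  · refine liminf_div_log_le_of_forall_const_mul_le (c := 2) (by norm_num) fun ε hε =>
      iSup₂_le fun μ hμ => ?_
    have : IsProbabilityMeasure μ := hμ.1
    exact essSup_brinKatok_le_sepEnt hT hε

section Theorems

variable [MetricSpace X] [CompactSpace X] [Nonempty X] [MeasurableSpace X] [BorelSpace X]

/-- Variational principle for the lower metric mean dimension in terms of Brin-Katok
local entropy, where `h_μ^{BK}(ε)` is the μ-essential supremum of `x ↦ h_μ^{BK}(x, ε)`
(Theorem 5.2, second part). -/
theorem lower_mdim_eq_liminf_brinKatok (T : X → X) (hT : IsHomeomorph T) :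
    mdimLower T = liminf (fun ε : ℝ =>
      (⨆ μ ∈ ergodicMeasures T, essSup (fun x => brinKatok T μ x ε) μ)
        / ((Real.log (1 / ε) : ℝ) : EReal)) (𝓝[>] (0:ℝ)) := by
  exact lower_mdim_eq_liminf_brinKatok_general T hT.continuous

end Theorems
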